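/- arXiv:2601.16053 — 2 statements merged into one kernel-verified Lean document; each statement's English description precedes it below -/
import Mathlib

section
/- Let 𝒜 be a unital C*-algebra and let p ≥ 1 be a real number. Then there exists a constant C > 0 such that for all positive elements A, B of 𝒜 one has ‖A^p − B^p‖ ≤ C · ‖A − B‖ · (‖A‖^{p−1} + ‖B‖^{p−1}), where the real powers of positive elements are defined via the continuous functional calculus. -/
open scoped NNReal

/-!
For `1 < p < 2` one has `a ^ p = ∫ f_t(a) dμ(t)` over `t > 0`, where
`f_t(x) = t ^ (p - 1) * (x / t + t / (t + x) - 1)`. With `u_a = t (t + a)⁻¹`, the resolvent identity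
gives
`f_t(a) - f_t(b) = t ^ (p - 2) * ((1 - u_a) (a - b) + u_a (a - b) (1 - u_b))`.
If `‖a‖, ‖b‖ ≤ M`, then `‖u_a‖ ≤ 1` and `‖1 - u_a‖, ‖1 - u_b‖ ≤ M / (t + M)`, so the norm of this
difference is at most `2 M⁻¹ f_t(M) ‖a - b‖`, and integrating gives the bound
`2 M ^ (p - 1) ‖a - b‖`. Larger exponents follow from
`a ^ (p + 1) - b ^ (p + 1) = a (a ^ p - b ^ p) + (a - b) b ^ p`.
-/

open Real Set MeasureTheory

lemma continuousOn_mul_inv_add {t : ℝ} (ht : 0 < t) :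
    ContinuousOn (fun x : ℝ ↦ t * (t + x)⁻¹) (Ici 0) :=
  continuousOn_const.mul <| ContinuousOn.inv₀ (by fun_prop) fun _ hx ↦
    (add_pos_of_pos_of_nonneg ht hx).ne'

lemma continuousOn_mul_inv_add_spectrum {A : Type*} [Ring A] [Algebra ℝ A] [PartialOrder A]
    [NonnegSpectrumClass ℝ A] {t : ℝ} (ht : 0 < t) {a : A} (ha : 0 ≤ a) :
    ContinuousOn (fun x : ℝ ↦ t * (t + x)⁻¹) (spectrum ℝ a) :=
  (continuousOn_mul_inv_add ht).mono fun _ hx ↦ spectrum_nonneg_of_nonneg ha hx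

lemma continuousOn_rpowIntegrand₁₂ (p : ℝ) {t : ℝ} (ht : 0 < t) :
    ContinuousOn (rpowIntegrand₁₂ p t) (Ici 0) :=
  continuousOn_const.mul <|
    (ContinuousOn.add (by fun_prop) (continuousOn_mul_inv_add ht)).sub continuousOn_const

section ContinuousFunctionalCalculus

variable {A : Type*} [Ring A] [StarRing A] [TopologicalSpace A] [Algebra ℝ A]
  [ContinuousFunctionalCalculus ℝ A IsSelfAdjoint]

/-- The resolvent of `-a` at `t`, normalized to `t (t + a)⁻¹` so that it is a contraction when
`0 ≤ a` and `0 < t`. It is encoded through the continuous functional calculus. -/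
noncomputable def scaledResolvent (t : ℝ) (a : A) : A :=
  cfc (fun x : ℝ ↦ t * (t + x)⁻¹) a

lemma algebraMap_add_eq_cfc (t : ℝ) {a : A} (ha : IsSelfAdjoint a) :
    algebraMap ℝ A t + a = cfc (fun x : ℝ ↦ t + x) a := by
  rw [cfc_const_add t (fun x ↦ x) a, cfc_id' ℝ a]

variable [PartialOrder A] [NonnegSpectrumClass ℝ A] [StarOrderedRing A]

lemma algebraMap_add_mul_scaledResolvent {t : ℝ} (ht : 0 < t) {a : A} (ha : 0 ≤ a) :
    (algebraMap ℝ A t + a) * scaledResolvent t a = algebraMap ℝ A t := by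
  rw [algebraMap_add_eq_cfc t ha.isSelfAdjoint, scaledResolvent,
    ← cfc_mul _ _ a (by fun_prop) (continuousOn_mul_inv_add_spectrum ht ha), ← cfc_const t a]
  refine cfc_congr fun x hx ↦ ?_
  have hx : 0 ≤ x := spectrum_nonneg_of_nonneg ha hx
  field_simp

lemma scaledResolvent_mul_algebraMap_add {t : ℝ} (ht : 0 < t) {a : A} (ha : 0 ≤ a) :
    scaledResolvent t a * (algebraMap ℝ A t + a) = algebraMap ℝ A t := by
  have h_comm : Commute (algebraMap ℝ A t + a) (scaledResolvent t a) := by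
    rw [algebraMap_add_eq_cfc t ha.isSelfAdjoint]
    exact cfc_commute_cfc _ _ a
  rw [← h_comm.eq, algebraMap_add_mul_scaledResolvent ht ha]

lemma scaledResolvent_sub_scaledResolvent {t : ℝ} (ht : 0 < t) {a b : A} (ha : 0 ≤ a)
    (hb : 0 ≤ b) :
    scaledResolvent t a - scaledResolvent t b =
      -(t⁻¹ • (scaledResolvent t a * (a - b) * scaledResolvent t b)) := by
  set u := scaledResolvent t a
  set v := scaledResolvent t b
  have h : u * (a - b) * v = -(t • (u - v)) := calc
    u * (a - b) * v = u * (algebraMap ℝ A t + a) * v - u * ((algebraMap ℝ A t + b) * v) := by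
      noncomm_ring
    _ = -(t • (u - v)) := by
      rw [scaledResolvent_mul_algebraMap_add ht ha, algebraMap_add_mul_scaledResolvent ht hb,
        ← Algebra.commutes, ← mul_sub, ← Algebra.smul_def, ← smul_neg, neg_sub]
  rw [h, smul_neg, neg_neg, inv_smul_smul₀ ht.ne']

end ContinuousFunctionalCalculus

section IsometricContinuousFunctionalCalculus

variable {A : Type*} [NormedRing A] [StarRing A] [NormedAlgebra ℝ A] [PartialOrder A]
  [NonnegSpectrumClass ℝ A] [IsometricContinuousFunctionalCalculus ℝ A IsSelfAdjoint]

lemma norm_scaledResolvent_le_one {t : ℝ} (ht : 0 < t) {a : A} (ha : 0 ≤ a) :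
    ‖scaledResolvent t a‖ ≤ 1 := by
  refine norm_cfc_le zero_le_one fun x hx ↦ ?_
  have hx : 0 ≤ x := spectrum_nonneg_of_nonneg ha hx
  rw [Real.norm_of_nonneg (by positivity), ← div_eq_mul_inv, div_le_one (by positivity)]
  linarith

lemma cfcₙ_rpowIntegrand₁₂_eq_cfc (p : ℝ) {t : ℝ} (ht : 0 < t) {a : A} (ha : 0 ≤ a) :
    cfcₙ (rpowIntegrand₁₂ p t) a = cfc (rpowIntegrand₁₂ p t) a :=
  cfcₙ_eq_cfc ((continuousOn_rpowIntegrand₁₂ p ht).mono fun _ ↦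
    quasispectrum_nonneg_of_nonneg a ha _) (rpowIntegrand₁₂_zero ht)

variable [StarOrderedRing A]

lemma norm_one_sub_scaledResolvent_le {t M : ℝ} (ht : 0 < t) {a : A} (ha : 0 ≤ a)
    (haM : ‖a‖ ≤ M) : ‖1 - scaledResolvent t a‖ ≤ M / (t + M) := by
  have hM : 0 ≤ M := (norm_nonneg a).trans haM
  rw [scaledResolvent, ← cfc_const_one ℝ a,
    ← cfc_sub _ _ a (by fun_prop) (continuousOn_mul_inv_add_spectrum ht ha)]
  refine norm_cfc_le (by positivity) fun x hx ↦ ?_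
  have hx_nonneg : 0 ≤ x := spectrum_nonneg_of_nonneg ha hx
  have hxM : x ≤ M := (le_abs_self x).trans
    ((IsometricContinuousFunctionalCalculus.norm_spectrum_le a hx).trans haM)
  have h_eq : 1 - t * (t + x)⁻¹ = x / (t + x) := by field_simp; ring
  rw [h_eq, Real.norm_of_nonneg (by positivity), div_le_div_iff₀ (by positivity) (by positivity)]
  nlinarith

lemma cfcₙ_rpowIntegrand₁₂_algebraMap (p : ℝ) {t : ℝ} (ht : 0 < t) (x : ℝ≥0) :
    cfcₙ (rpowIntegrand₁₂ p t) (algebraMap ℝ≥0 A x) = rpowIntegrand₁₂ p t x • 1 := by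
  rw [cfcₙ_rpowIntegrand₁₂_eq_cfc p ht (cfc_predicate_algebraMap x),
    IsScalarTower.algebraMap_apply ℝ≥0 ℝ A, cfc_algebraMap, Algebra.algebraMap_eq_smul_one]
  rfl

lemma cfcₙ_rpowIntegrand₁₂_eq_smul (p : ℝ) {t : ℝ} (ht : 0 < t) {a : A} (ha : 0 ≤ a) :
    cfcₙ (rpowIntegrand₁₂ p t) a = t ^ (p - 1) • (t⁻¹ • a + scaledResolvent t a - 1) := by
  have hc := continuousOn_mul_inv_add_spectrum ht ha
  have hc_add : ContinuousOn (fun x : ℝ ↦ t⁻¹ * x + t * (t + x)⁻¹) (spectrum ℝ a) :=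
    ContinuousOn.add (by fun_prop) hc
  rw [cfcₙ_rpowIntegrand₁₂_eq_cfc p ht ha]
  unfold rpowIntegrand₁₂
  rw [cfc_const_mul _ (fun x ↦ t⁻¹ * x + t * (t + x)⁻¹ - 1) a (hc_add.sub continuousOn_const),
    cfc_sub (fun x ↦ t⁻¹ * x + t * (t + x)⁻¹) _ a hc_add continuousOn_const,
    cfc_add a (fun x ↦ t⁻¹ * x) _ (by fun_prop) hc, cfc_const_mul_id t⁻¹ a, cfc_const_one ℝ a,
    scaledResolvent]

lemma cfcₙ_rpowIntegrand₁₂_sub (p : ℝ) {t : ℝ} (ht : 0 < t) {a b : A} (ha : 0 ≤ a) (hb : 0 ≤ b) :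
    cfcₙ (rpowIntegrand₁₂ p t) a - cfcₙ (rpowIntegrand₁₂ p t) b =
      (t ^ (p - 1) * t⁻¹) • ((1 - scaledResolvent t a) * (a - b) +
        scaledResolvent t a * (a - b) * (1 - scaledResolvent t b)) := by
  have h_diff := scaledResolvent_sub_scaledResolvent ht ha hb
  rw [cfcₙ_rpowIntegrand₁₂_eq_smul p ht ha, cfcₙ_rpowIntegrand₁₂_eq_smul p ht hb]
  set u := scaledResolvent t a
  set v := scaledResolvent t b
  calc t ^ (p - 1) • (t⁻¹ • a + u - 1) - t ^ (p - 1) • (t⁻¹ • b + v - 1)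
    _ = t ^ (p - 1) • (t⁻¹ • (a - b) + (u - v)) := by module
    _ = (t ^ (p - 1) * t⁻¹) • (a - b - u * (a - b) * v) := by rw [h_diff]; module
    _ = (t ^ (p - 1) * t⁻¹) • ((1 - u) * (a - b) + u * (a - b) * (1 - v)) := by
      congr 1; noncomm_ring

lemma norm_cfcₙ_rpowIntegrand₁₂_sub_le (p : ℝ) {t M : ℝ} (ht : 0 < t) (hM : 0 < M) {a b : A}
    (ha : 0 ≤ a) (hb : 0 ≤ b) (haM : ‖a‖ ≤ M) (hbM : ‖b‖ ≤ M) :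
    ‖cfcₙ (rpowIntegrand₁₂ p t) a - cfcₙ (rpowIntegrand₁₂ p t) b‖ ≤
      rpowIntegrand₁₂ p t M * (2 * M⁻¹ * ‖a - b‖) := by
  rw [cfcₙ_rpowIntegrand₁₂_sub p ht ha hb, norm_smul, Real.norm_of_nonneg (by positivity)]
  set u := scaledResolvent t a
  set v := scaledResolvent t b
  have h_left : ‖(1 - u) * (a - b)‖ ≤ M / (t + M) * ‖a - b‖ :=
    norm_mul_le_of_le (norm_one_sub_scaledResolvent_le ht ha haM) le_rfl
  have h_right : ‖u * (a - b) * (1 - v)‖ ≤ 1 * ‖a - b‖ * (M / (t + M)) :=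
    norm_mul_le_of_le (norm_mul_le_of_le (norm_scaledResolvent_le_one ht ha) le_rfl)
      (norm_one_sub_scaledResolvent_le ht hb hbM)
  calc t ^ (p - 1) * t⁻¹ * ‖(1 - u) * (a - b) + u * (a - b) * (1 - v)‖
    _ ≤ t ^ (p - 1) * t⁻¹ * (M / (t + M) * ‖a - b‖ + 1 * ‖a - b‖ * (M / (t + M))) := by
      gcongr
      exact norm_add_le_of_le h_left h_right
    _ = rpowIntegrand₁₂ p t M * (2 * M⁻¹ * ‖a - b‖) := by
      rw [rpowIntegrand₁₂]
      field_simp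
      ring

lemma rpow_add_one_eq_mul_rpow {p : ℝ} (hp : 0 < p) {a : A} (ha : 0 ≤ a) :
    a ^ (p + 1) = a * a ^ p := by
  lift p to ℝ≥0 using hp.le
  have hp : 0 < p := mod_cast hp
  calc a ^ ((p : ℝ) + 1) = a ^ (1 + p) := by
        rw [CFC.nnrpow_eq_rpow (by positivity), NNReal.coe_add, NNReal.coe_one, add_comm]
    _ = a * a ^ (p : ℝ) := by
        rw [CFC.nnrpow_add one_pos hp, CFC.nnrpow_one a, CFC.nnrpow_eq_rpow hp]

lemma norm_rpow_add_one_sub_le {p C M : ℝ} (hp : 0 < p) {a b : A} (ha : 0 ≤ a) (hb : 0 ≤ b)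
    (haM : ‖a‖ ≤ M) (hbM : ‖b‖ ≤ M) (h : ‖a ^ p - b ^ p‖ ≤ C * ‖a - b‖ * M ^ (p - 1)) :
    ‖a ^ (p + 1) - b ^ (p + 1)‖ ≤ (C + 1) * ‖a - b‖ * M ^ p := by
  have hM : 0 ≤ M := (norm_nonneg a).trans haM
  have h_split : a ^ (p + 1) - b ^ (p + 1) = a * (a ^ p - b ^ p) + (a - b) * b ^ p := by
    rw [rpow_add_one_eq_mul_rpow hp ha, rpow_add_one_eq_mul_rpow hp hb]
    noncomm_ring
  have h_norm : ‖b ^ p‖ ≤ M ^ p := by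
    rw [CFC.norm_rpow b hp]
    gcongr
  have h_pow : M ^ p = M ^ (p - 1) * M := by
    rw [← Real.rpow_add_one' hM (by linarith), sub_add_cancel]
  calc ‖a ^ (p + 1) - b ^ (p + 1)‖
    _ ≤ M * (C * ‖a - b‖ * M ^ (p - 1)) + ‖a - b‖ * M ^ p := by
      rw [h_split]
      exact norm_add_le_of_le (norm_mul_le_of_le haM h) (norm_mul_le_of_le le_rfl h_norm)
    _ = (C + 1) * ‖a - b‖ * M ^ p := by
      rw [h_pow]
      ring

variable [CompleteSpace A]

/- Mathlib's scalar and operator representations are separate existence statements, which need not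
produce the same measure; the scalar one is recovered here from the operator one at scalars. -/
variable (A) in
lemma exists_measure_rpow_eq_integral_rpowIntegrand₁₂_and_cfcₙ [Nontrivial A] {p : ℝ}
    (hp : p ∈ Ioo 1 2) :
    ∃ μ : Measure ℝ,
      (∀ x : ℝ≥0, IntegrableOn (fun t ↦ rpowIntegrand₁₂ p t x) (Ioi 0) μ ∧
        (x : ℝ) ^ p = ∫ t in Ioi 0, rpowIntegrand₁₂ p t x ∂μ) ∧
      ∀ a : A, 0 ≤ a → IntegrableOn (fun t ↦ cfcₙ (rpowIntegrand₁₂ p t) a) (Ioi 0) μ ∧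
        a ^ p = ∫ t in Ioi 0, cfcₙ (rpowIntegrand₁₂ p t) a ∂μ := by
  lift p to ℝ≥0 using by linarith [hp.1]
  have hp : p ∈ Ioo 1 2 := mod_cast hp
  have hp_pos : 0 < p := one_pos.trans hp.1
  obtain ⟨μ, hμ⟩ := CFC.exists_measure_nnrpow_eq_integral_cfcₙ_rpowIntegrand₁₂ A hp
  simp only [CFC.nnrpow_eq_rpow hp_pos, mem_Ici] at hμ
  refine ⟨μ, fun x ↦ ?_, hμ⟩
  obtain ⟨h_integrable, h_integral⟩ := hμ (algebraMap ℝ≥0 A x) (cfc_predicate_algebraMap x)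
  have h_smul : EqOn (fun t ↦ cfcₙ (rpowIntegrand₁₂ p t) (algebraMap ℝ≥0 A x))
      (fun t ↦ rpowIntegrand₁₂ p t x • 1) (Ioi 0) := fun _ ht ↦
    cfcₙ_rpowIntegrand₁₂_algebraMap p ht x
  constructor
  · rw [integrableOn_congr_fun h_smul measurableSet_Ioi] at h_integrable
    exact (integrable_smul_const one_ne_zero).mp h_integrable
  · rw [setIntegral_congr_fun measurableSet_Ioi h_smul, integral_smul_const, CFC.rpow_algebraMap,
      Algebra.algebraMap_eq_smul_one, NNReal.smul_def, NNReal.coe_rpow] at h_integral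
    exact smul_left_injective ℝ one_ne_zero h_integral

lemma norm_rpow_sub_rpow_le_of_mem_Ioo {p M : ℝ} (hp : p ∈ Ioo 1 2) {a b : A} (ha : 0 ≤ a)
    (hb : 0 ≤ b) (haM : ‖a‖ ≤ M) (hbM : ‖b‖ ≤ M) :
    ‖a ^ p - b ^ p‖ ≤ 2 * ‖a - b‖ * M ^ (p - 1) := by
  rcases eq_or_ne a b with rfl | hab
  · simp
  have : Nontrivial A := ⟨a, b, hab⟩
  have hM : 0 < M := by
    by_contra! hM
    exact hab <| (norm_le_zero_iff.mp (haM.trans hM)).trans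
      (norm_le_zero_iff.mp (hbM.trans hM)).symm
  obtain ⟨μ, hμ_real, hμ⟩ := exists_measure_rpow_eq_integral_rpowIntegrand₁₂_and_cfcₙ A hp
  have hM_integrable : IntegrableOn (fun t ↦ rpowIntegrand₁₂ p t M) (Ioi 0) μ :=
    (hμ_real ⟨M, hM.le⟩).1
  have hM_integral : M ^ p = ∫ t in Ioi 0, rpowIntegrand₁₂ p t M ∂μ := (hμ_real ⟨M, hM.le⟩).2
  obtain ⟨ha_integrable, ha_integral⟩ := hμ a ha
  obtain ⟨hb_integrable, hb_integral⟩ := hμ b hb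
  rw [ha_integral, hb_integral, ← integral_sub ha_integrable hb_integrable]
  calc ‖∫ t in Ioi 0, (cfcₙ (rpowIntegrand₁₂ p t) a - cfcₙ (rpowIntegrand₁₂ p t) b) ∂μ‖
    _ ≤ ∫ t in Ioi 0, rpowIntegrand₁₂ p t M * (2 * M⁻¹ * ‖a - b‖) ∂μ := by
      refine norm_integral_le_of_norm_le (hM_integrable.mul_const _) ?_
      filter_upwards [ae_restrict_mem measurableSet_Ioi] with t ht
      exact norm_cfcₙ_rpowIntegrand₁₂_sub_le p ht hM ha hb haM hbM
    _ = 2 * ‖a - b‖ * M ^ (p - 1) := by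
      rw [integral_mul_const, ← hM_integral, Real.rpow_sub_one hM.ne']
      ring

lemma norm_rpow_sub_rpow_le {p M : ℝ} (hp : 1 ≤ p) {a b : A} (ha : 0 ≤ a) (hb : 0 ≤ b)
    (haM : ‖a‖ ≤ M) (hbM : ‖b‖ ≤ M) :
    ‖a ^ p - b ^ p‖ ≤ (p + 1) * ‖a - b‖ * M ^ (p - 1) := by
  have hM : 0 ≤ M := (norm_nonneg a).trans haM
  obtain ⟨n, hn⟩ := exists_nat_gt (p - 1)
  induction n generalizing p with
  | zero => exact absurd hn (by simpa using hp)
  | succ n ih =>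
    rcases hp.eq_or_lt with rfl | hp_one
    · rw [CFC.rpow_one a, CFC.rpow_one b, sub_self, Real.rpow_zero]
      linarith [norm_nonneg (a - b)]
    rcases lt_or_ge p 2 with hp_two | hp_two
    · refine (norm_rpow_sub_rpow_le_of_mem_Ioo ⟨hp_one, hp_two⟩ ha hb haM hbM).trans ?_
      gcongr
      linarith
    · have h_prev := ih (p := p - 1) (by linarith) (by push_cast at hn; linarith)
      simpa only [sub_add_cancel] using
        norm_rpow_add_one_sub_le (by linarith) ha hb haM hbM h_prev

theorem power_difference_estimate_cstar_general {p : ℝ} (hp : 1 ≤ p) {a b : A} (ha : 0 ≤ a)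
    (hb : 0 ≤ b) :
    ‖a ^ p - b ^ p‖ ≤ (p + 1) * ‖a - b‖ * (‖a‖ ^ (p - 1) + ‖b‖ ^ (p - 1)) := by
  have h_max : max ‖a‖ ‖b‖ ^ (p - 1) ≤ ‖a‖ ^ (p - 1) + ‖b‖ ^ (p - 1) := by
    rw [(Real.monotoneOn_rpow_Ici_of_exponent_nonneg (sub_nonneg.mpr hp)).map_max
      (norm_nonneg a) (norm_nonneg b)]
    exact max_le_add_of_nonneg (by positivity) (by positivity)
  refine (norm_rpow_sub_rpow_le hp ha hb (le_max_left _ _) (le_max_right _ _)).trans ?_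
  gcongr

end IsometricContinuousFunctionalCalculus

/-- **Lipschitz-type estimate for powers in a unital C*-algebra** (operator-norm case of the
paper's Corollary 4.2): for `p ≥ 1` there is a constant `C > 0` such that for all positive
elements `A, B`, `‖A^p − B^p‖ ≤ C ‖A − B‖ (‖A‖^{p−1} + ‖B‖^{p−1})`, where real powers of
positive elements are taken via the continuous functional calculus (`CFC.rpow`). -/
theorem power_difference_estimate_cstar
    {𝒜 : Type*} [CStarAlgebra 𝒜] [PartialOrder 𝒜] [StarOrderedRing 𝒜]
    (p : ℝ) (hp : 1 ≤ p) :
    ∃ C : ℝ, 0 < C ∧ ∀ A B : 𝒜, 0 ≤ A → 0 ≤ B →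
      ‖CFC.rpow A p - CFC.rpow B p‖ ≤
        C * ‖A - B‖ * (‖A‖ ^ (p - 1) + ‖B‖ ^ (p - 1)) := by
  exact ⟨p + 1, by linarith, fun _ _ ↦ power_difference_estimate_cstar_general hp⟩
end

section
/- Let d ≥ 1 be a natural number and let p be a real number with 1 < p ≤ 1 + 2/d. Let u₀ : ℝ^d → ℝ be a bounded measurable function with u₀ ≥ 0 almost everywhere. Suppose u : [0,∞) × ℝ^d → ℝ is jointly measurable, that u(t, ·) ≥ 0 almost everywhere for each t ≥ 0, that for every T > 0 one has sup_{0 ≤ t ≤ T} ‖u(t, ·)‖_{L^∞(ℝ^d)} < ∞, and that for every t ≥ 0 and almost every x ∈ ℝ^d the mild-solution identity holds: u(t, x) = ∫_{ℝ^d} G_t(x − y)·u₀(y) dy + ∫₀^t ∫_{ℝ^d} G_{t−s}(x − y)·u(s, y)^p dy ds (with the first term interpreted as u₀(x) when t = 0). Then u₀ = 0 almost everywhere. -/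
open MeasureTheory

/-- The Gaussian heat kernel `G_t(η) = (4πt)^{−d/2} exp(−|η|²/(4t))` on `ℝ^d`. -/
noncomputable def heatKernel (d : ℕ) (t : ℝ) (η : EuclideanSpace ℝ (Fin d)) : ℝ :=
  (4 * Real.pi * t) ^ (-(d : ℝ) / 2) * Real.exp (-‖η‖ ^ 2 / (4 * t))

/-!
Let `U` be a mild supersolution. Fix a base point `x` and a final time `T`, and let `H s` be the
part of the Duhamel term at `(T, x)` due to the source on times below `s`. The semigroup law gives
`H s ≤ e^{(T-s)Δ} U(s) (x)`, and Jensen's inequality turns this into the growth inequality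
`H s + (t - s) * H s ^ p ≤ H t`. If `H` stays finite up to time `T`, then `(T - s) * H s ^ (p - 1)`
is bounded by a constant depending only on `p`.

Nonzero data force `U(r)` above a multiple of the Gaussian `G_{r/2}` centred at `x`. Since
`d * (p - 1) ≤ 2`, the source at time `r` then contributes at least a multiple of `T ^ (-d/2) / r`
to `H`, so `H (T / 2)` is at least a multiple of `T ^ (-d/2) * log (T / 4)`. Hence
`T * H (T / 2) ^ (p - 1)` is at least a multiple of `log (T / 4) ^ (p - 1)`, which is unbounded even
in the critical case.
-/

section Preliminaries

open Set Filter Finset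
open scoped ENNReal

variable {α : Type*} [MeasurableSpace α] {μ : Measure α}

theorem rpow_lintegral_le_lintegral_rpow [IsProbabilityMeasure μ] {p : ℝ} (hp : 1 ≤ p)
    {f : α → ℝ≥0∞} (hf : AEMeasurable f μ) : (∫⁻ x, f x ∂μ) ^ p ≤ ∫⁻ x, f x ^ p ∂μ := by
  have hp₀ : 0 < p := one_pos.trans_le hp
  have h := eLpNorm'_le_eLpNorm'_of_exponent_le one_pos hp μ hf.aestronglyMeasurable
  simp only [eLpNorm'_eq_lintegral_enorm, enorm_eq_self, ENNReal.rpow_one, one_div, inv_one] at h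
  rwa [ENNReal.le_rpow_inv_iff hp₀] at h

theorem ofReal_integral_eq_lintegral_ofReal_of_ne_top {f : α → ℝ} (hf : AEStronglyMeasurable f μ)
    (hf₀ : 0 ≤ᵐ[μ] f) (hf_top : ∫⁻ x, ENNReal.ofReal (f x) ∂μ ≠ ∞) :
    ENNReal.ofReal (∫ x, f x ∂μ) = ∫⁻ x, ENNReal.ofReal (f x) ∂μ := by
  rw [integral_eq_lintegral_of_nonneg_ae hf₀ hf, ENNReal.ofReal_toReal hf_top]

theorem ae_ofReal_le_of_eLpNorm_top_le {f : α → ℝ} {C : ℝ≥0∞} (hf : eLpNorm f ∞ μ ≤ C) :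
    ∀ᵐ x ∂μ, ENNReal.ofReal (f x) ≤ C := by
  rw [eLpNorm_exponent_top] at hf
  filter_upwards [ae_le_eLpNormEssSup (f := f) (μ := μ)] with x hx
  exact (Real.ofReal_le_enorm _).trans (hx.trans hf)

theorem setLIntegral_Ioo_ofReal_mul_inv {a b c : ℝ} (ha : 0 < a) (hab : a ≤ b) (hc : 0 ≤ c) :
    ∫⁻ r in Ioo a b, ENNReal.ofReal (c * r⁻¹) = ENNReal.ofReal (c * Real.log (b / a)) := by
  have hint : IntegrableOn (fun r : ℝ => c * r⁻¹) (Ioo a b) := by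
    refine (ContinuousOn.integrableOn_Icc (continuousOn_const.mul ?_)).mono_set Ioo_subset_Icc_self
    exact continuousOn_inv₀.mono fun r hr => (ha.trans_le hr.1).ne'
  have hnonneg : ∀ᵐ r ∂volume.restrict (Ioo a b), 0 ≤ c * r⁻¹ :=
    (ae_restrict_iff' measurableSet_Ioo).2 <| .of_forall fun r hr =>
      mul_nonneg hc (inv_nonneg.2 (ha.trans hr.1).le)
  rw [← ofReal_integral_eq_lintegral_ofReal hint hnonneg, integral_const_mul,
    ← integral_Ioc_eq_integral_Ioo, ← intervalIntegral.integral_of_le hab,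
    integral_inv_of_pos ha (ha.trans_le hab)]

section Growth

variable {p s T A : ℝ} {H : ℝ → ℝ}

/- At height `2 ^ k * A` the growth inequality doubles `H` within time `(2 ^ k * A) ^ (1 - p)`;
these doubling times form a geometric series of ratio `2 ^ (1 - p) < 1`. -/
theorem two_pow_mul_le_of_superlinear_growth (hA : 0 < A) (hp : 0 ≤ p)
    (hAs : A ≤ H s)
    (hH : ∀ a b, s ≤ a → a ≤ b → b ≤ T → H a + (b - a) * H a ^ p ≤ H b) (k : ℕ)
    (hk : s + A ^ (1 - p) * ∑ j ∈ range k, ((2 : ℝ) ^ (1 - p)) ^ j ≤ T) :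
    2 ^ k * A ≤ H (s + A ^ (1 - p) * ∑ j ∈ range k, ((2 : ℝ) ^ (1 - p)) ^ j) := by
  induction k with
  | zero => simpa using hAs
  | succ k ih =>
    set τ : ℝ := s + A ^ (1 - p) * ∑ j ∈ range k, ((2 : ℝ) ^ (1 - p)) ^ j
    have hB : 0 < 2 ^ k * A := by positivity
    have hsucc : s + A ^ (1 - p) * ∑ j ∈ range (k + 1), ((2 : ℝ) ^ (1 - p)) ^ j =
        τ + (2 ^ k * A) ^ (1 - p) := by
      rw [sum_range_succ, Real.mul_rpow (by positivity) hA.le, ← Real.rpow_pow_comm two_pos.le]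
      ring
    have hstep : 0 < (2 ^ k * A) ^ (1 - p) := by positivity
    have hsτ : s ≤ τ := le_add_of_nonneg_right (by positivity)
    rw [hsucc] at hk ⊢
    have hτ : 2 ^ k * A ≤ H τ := ih (by linarith)
    calc 2 ^ (k + 1) * A = 2 ^ k * A + (2 ^ k * A) ^ (1 - p) * (2 ^ k * A) ^ p := by
          rw [← Real.rpow_add hB, sub_add_cancel, Real.rpow_one]; ring
      _ ≤ H τ + (τ + (2 ^ k * A) ^ (1 - p) - τ) * H τ ^ p := by
          rw [add_sub_cancel_left]; gcongr
      _ ≤ H (τ + (2 ^ k * A) ^ (1 - p)) := hH _ _ hsτ (by linarith) hk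

theorem sub_mul_rpow_le_of_superlinear_growth (hp : 1 < p) (hA : 0 < A) (hAs : A ≤ H s)
    (hH : ∀ a b, s ≤ a → a ≤ b → b ≤ T → H a + (b - a) * H a ^ p ≤ H b) :
    (T - s) * A ^ (p - 1) ≤ (1 - 2 ^ (1 - p))⁻¹ := by
  by_contra! hlt
  set q : ℝ := 2 ^ (1 - p) with hq
  have hq₀ : 0 ≤ q := by positivity
  have hq₁ : q < 1 := Real.rpow_lt_one_of_one_lt_of_neg one_lt_two (by linarith)
  have hlife : A ^ (1 - p) * (1 - q)⁻¹ ≤ T - s := by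
    rw [← neg_sub, Real.rpow_neg hA.le, inv_mul_le_iff₀ (by positivity), mul_comm]
    exact hlt.le
  have hgeom (k : ℕ) : ∑ j ∈ range k, q ^ j ≤ (1 - q)⁻¹ :=
    (tsum_geometric_of_lt_one hq₀ hq₁) ▸
      (summable_geometric_of_lt_one hq₀ hq₁).sum_le_tsum _ fun j _ => by positivity
  have hτ (k : ℕ) : s + A ^ (1 - p) * ∑ j ∈ range k, q ^ j ≤ T := by
    have := mul_le_mul_of_nonneg_left (hgeom k) (Real.rpow_nonneg hA.le (1 - p))
    linarith
  have hT (k : ℕ) : 2 ^ k * A ≤ H T := by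
    set τ : ℝ := s + A ^ (1 - p) * ∑ j ∈ range k, q ^ j
    have hk : 2 ^ k * A ≤ H τ :=
      two_pow_mul_le_of_superlinear_growth hA (by linarith) hAs hH k (hτ k)
    have hHτ : 0 ≤ (T - τ) * H τ ^ p :=
      mul_nonneg (sub_nonneg.2 (hτ k)) (Real.rpow_nonneg (hk.trans' (by positivity)) p)
    have hsτ : s ≤ τ := le_add_of_nonneg_right (by positivity)
    linarith [hH τ T hsτ (hτ k) le_rfl]
  obtain ⟨k, hk⟩ := pow_unbounded_of_one_lt (H T / A) (one_lt_two (α := ℝ))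
  exact ((div_lt_iff₀ hA).1 hk).not_ge (hT k)

end Growth

end Preliminaries

section HeatKernel

variable {d : ℕ} {s t : ℝ}

theorem heatKernel_pos (ht : 0 < t) (η : EuclideanSpace ℝ (Fin d)) : 0 < heatKernel d t η := by
  unfold heatKernel
  positivity

theorem heatKernel_zero (d : ℕ) (t : ℝ) :
    heatKernel d t 0 = (4 * Real.pi * t) ^ (-(d : ℝ) / 2) := by
  simp [heatKernel]

@[fun_prop]
theorem measurable_heatKernel {α : Type*} [MeasurableSpace α] {τ : α → ℝ}
    {f : α → EuclideanSpace ℝ (Fin d)} (hτ : Measurable τ) (hf : Measurable f) :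
    Measurable fun a => heatKernel d (τ a) (f a) := by
  unfold heatKernel
  fun_prop

theorem integral_heatKernel (ht : 0 < t) : ∫ η, heatKernel d t η = 1 := by
  have hgauss := GaussianFourier.integral_rexp_neg_mul_sq_norm (V := EuclideanSpace ℝ (Fin d))
    (b := (4 * t)⁻¹) (by positivity)
  have hexp (η : EuclideanSpace ℝ (Fin d)) : -‖η‖ ^ 2 / (4 * t) = -(4 * t)⁻¹ * ‖η‖ ^ 2 := by ring
  simp_rw [heatKernel, hexp]
  rw [integral_const_mul, hgauss, finrank_euclideanSpace_fin, div_inv_eq_mul, mul_left_comm,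
    ← mul_assoc, ← Real.rpow_add (by positivity), neg_div, neg_add_cancel, Real.rpow_zero]

theorem lintegral_heatKernel (ht : 0 < t) :
    ∫⁻ η : EuclideanSpace ℝ (Fin d), ENNReal.ofReal (heatKernel d t η) = 1 := by
  have hint : Integrable (heatKernel d t) :=
    .of_integral_ne_zero (by rw [integral_heatKernel ht]; exact one_ne_zero)
  rw [← ofReal_integral_eq_lintegral_ofReal hint (.of_forall fun η => (heatKernel_pos ht η).le),
    integral_heatKernel ht, ENNReal.ofReal_one]

theorem heatKernel_mul_heatKernel (hs : 0 < s) (ht : 0 < t) (η ζ : EuclideanSpace ℝ (Fin d)) :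
    heatKernel d s η * heatKernel d t ζ = heatKernel d (s + t) (η + ζ) *
      heatKernel d (s * t / (s + t)) ((s / (s + t)) • ζ - (t / (s + t)) • η) := by
  have hscale : (4 * Real.pi * s) ^ (-(d : ℝ) / 2) * (4 * Real.pi * t) ^ (-(d : ℝ) / 2) =
      (4 * Real.pi * (s + t)) ^ (-(d : ℝ) / 2) *
        (4 * Real.pi * (s * t / (s + t))) ^ (-(d : ℝ) / 2) := by
    rw [← Real.mul_rpow (by positivity) (by positivity),
      ← Real.mul_rpow (by positivity) (by positivity)]
    congr 1
    field_simp
  have hsquare : -‖η‖ ^ 2 / (4 * s) + -‖ζ‖ ^ 2 / (4 * t) = -‖η + ζ‖ ^ 2 / (4 * (s + t)) +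
      -‖(s / (s + t)) • ζ - (t / (s + t)) • η‖ ^ 2 / (4 * (s * t / (s + t))) := by
    rw [norm_sub_sq_real, norm_add_sq_real, inner_smul_left, inner_smul_right, norm_smul, norm_smul,
      mul_pow, mul_pow, Real.norm_eq_abs, Real.norm_eq_abs, sq_abs, sq_abs, real_inner_comm]
    simp only [conj_trivial]
    field_simp
    ring
  simp only [heatKernel]
  rw [mul_mul_mul_comm, ← Real.exp_add, hscale, hsquare, Real.exp_add, mul_mul_mul_comm]

theorem lintegral_heatKernel_mul_heatKernel (hs : 0 < s) (ht : 0 < t)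
    (x z : EuclideanSpace ℝ (Fin d)) :
    ∫⁻ y, ENNReal.ofReal (heatKernel d s (x - y)) * ENNReal.ofReal (heatKernel d t (y - z)) =
      ENNReal.ofReal (heatKernel d (s + t) (x - z)) := by
  have hst : s / (s + t) + t / (s + t) = 1 := by field_simp
  have hcenter (y : EuclideanSpace ℝ (Fin d)) :
      (s / (s + t)) • (y - z) - (t / (s + t)) • (x - y) =
        y - ((s / (s + t)) • z + (t / (s + t)) • x) := by
    linear_combination (norm := module) hst • y
  simp_rw [← ENNReal.ofReal_mul (heatKernel_pos hs _).le, heatKernel_mul_heatKernel hs ht,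
    sub_add_sub_cancel, hcenter, ENNReal.ofReal_mul (heatKernel_pos (add_pos hs ht) _).le]
  rw [lintegral_const_mul' _ _ ENNReal.ofReal_ne_top, lintegral_sub_right_eq_self
    (fun η => ENNReal.ofReal (heatKernel d (s * t / (s + t)) η)),
    lintegral_heatKernel (by positivity), mul_one]

theorem heatKernel_rpow {p : ℝ} (hp : 0 < p) (ht : 0 < t) (η : EuclideanSpace ℝ (Fin d)) :
    heatKernel d t η ^ p = p ^ (-(d : ℝ) / 2) * (4 * Real.pi * t) ^ (-(d : ℝ) / 2 * (p - 1)) *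
      heatKernel d (t / p) η := by
  have hexp : Real.exp (-‖η‖ ^ 2 / (4 * t)) ^ p = Real.exp (-‖η‖ ^ 2 / (4 * (t / p))) := by
    rw [← Real.exp_mul]
    congr 1
    field_simp
  have hscale : (4 * Real.pi * t) ^ (-(d : ℝ) / 2) =
      p ^ (-(d : ℝ) / 2) * (4 * Real.pi * (t / p)) ^ (-(d : ℝ) / 2) := by
    rw [← Real.mul_rpow hp.le (by positivity)]
    congr 1
    field_simp
  have hpow : ((4 * Real.pi * t) ^ (-(d : ℝ) / 2)) ^ p =
      (4 * Real.pi * t) ^ (-(d : ℝ) / 2 * (p - 1)) * (4 * Real.pi * t) ^ (-(d : ℝ) / 2) := by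
    rw [← Real.rpow_mul (by positivity), ← Real.rpow_add (by positivity)]
    congr 1
    ring
  simp only [heatKernel]
  rw [Real.mul_rpow (by positivity) (by positivity), hexp, hpow]
  rw [hscale]
  ring

theorem mul_heatKernel_mul_heatKernel_le (hs : 0 < s) (hst : 2 * s ≤ t)
    (η ζ : EuclideanSpace ℝ (Fin d)) :
    (2 * Real.pi * s) ^ ((d : ℝ) / 2) * heatKernel d (t / 2) η * heatKernel d s ζ ≤
      heatKernel d t (η + ζ) := by
  have ht : 0 < t := by linarith
  have hscale : (2 * Real.pi * s) ^ ((d : ℝ) / 2) * (4 * Real.pi * (t / 2)) ^ (-(d : ℝ) / 2) *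
      (4 * Real.pi * s) ^ (-(d : ℝ) / 2) = (4 * Real.pi * t) ^ (-(d : ℝ) / 2) := by
    rw [← inv_inv (2 * Real.pi * s), Real.inv_rpow (by positivity), ← Real.rpow_neg (by positivity),
      ← neg_div, ← Real.mul_rpow (by positivity) (by positivity),
      ← Real.mul_rpow (by positivity) (by positivity)]
    congr 1
    field_simp
    ring
  have hexp : -‖η‖ ^ 2 / (4 * (t / 2)) + -‖ζ‖ ^ 2 / (4 * s) ≤ -‖η + ζ‖ ^ 2 / (4 * t) := by
    have hpar : ‖η + ζ‖ ^ 2 ≤ 2 * ‖η‖ ^ 2 + 2 * ‖ζ‖ ^ 2 := by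
      linarith [parallelogram_law_with_norm ℝ η ζ, sq_nonneg ‖η - ζ‖]
    have hζ : -‖ζ‖ ^ 2 / (4 * s) ≤ -‖ζ‖ ^ 2 / (4 * (t / 2)) := by
      rw [neg_div, neg_div, neg_le_neg_iff]
      gcongr
      linarith
    calc -‖η‖ ^ 2 / (4 * (t / 2)) + -‖ζ‖ ^ 2 / (4 * s)
        ≤ -‖η‖ ^ 2 / (4 * (t / 2)) + -‖ζ‖ ^ 2 / (4 * (t / 2)) := by gcongr
      _ = -(2 * ‖η‖ ^ 2 + 2 * ‖ζ‖ ^ 2) / (4 * t) := by field_simp; ring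
      _ ≤ -‖η + ζ‖ ^ 2 / (4 * t) := by gcongr
  simp only [heatKernel]
  calc _ = (2 * Real.pi * s) ^ ((d : ℝ) / 2) * (4 * Real.pi * (t / 2)) ^ (-(d : ℝ) / 2) *
        (4 * Real.pi * s) ^ (-(d : ℝ) / 2) *
          Real.exp (-‖η‖ ^ 2 / (4 * (t / 2)) + -‖ζ‖ ^ 2 / (4 * s)) := by rw [Real.exp_add]; ring
    _ ≤ _ := by rw [hscale]; gcongr

end HeatKernel

section HeatFlow

open Filter
open scoped ENNReal

variable {d : ℕ} {s t : ℝ} {f g : EuclideanSpace ℝ (Fin d) → ℝ≥0∞} {x : EuclideanSpace ℝ (Fin d)}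

/-- The heat semigroup `e^{tΔ} f (x) = (G_t * f)(x)` acting on nonnegative functions, for `t > 0`.
Values in `[0, ∞]` make it total, with no integrability conditions. -/
noncomputable def heatFlow (t : ℝ) (f : EuclideanSpace ℝ (Fin d) → ℝ≥0∞)
    (x : EuclideanSpace ℝ (Fin d)) : ℝ≥0∞ :=
  ∫⁻ y, ENNReal.ofReal (heatKernel d t (x - y)) * f y

theorem measurable_heatFlow {α : Type*} [MeasurableSpace α] {τ : α → ℝ}
    {F : α → EuclideanSpace ℝ (Fin d) → ℝ≥0∞} {γ : α → EuclideanSpace ℝ (Fin d)}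
    (hτ : Measurable τ) (hF : Measurable (Function.uncurry F)) (hγ : Measurable γ) :
    Measurable fun a => heatFlow (τ a) (F a) (γ a) :=
  Measurable.lintegral_prod_right' (f := fun z : α × EuclideanSpace ℝ (Fin d) =>
    ENNReal.ofReal (heatKernel d (τ z.1) (γ z.1 - z.2)) * F z.1 z.2) <|
    (by fun_prop : Measurable fun z : α × EuclideanSpace ℝ (Fin d) =>
      ENNReal.ofReal (heatKernel d (τ z.1) (γ z.1 - z.2))).mul hF

theorem heatFlow_mono_ae (h : f ≤ᵐ[volume] g) : heatFlow t f x ≤ heatFlow t g x :=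
  lintegral_mono_ae <| h.mono fun _ hy => mul_le_mul_right hy _

theorem heatFlow_const_mul {c : ℝ≥0∞} (hc : c ≠ ∞) :
    heatFlow t (fun y => c * f y) x = c * heatFlow t f x := by
  simp only [heatFlow, mul_left_comm _ c, lintegral_const_mul' _ _ hc]

theorem lintegral_heatKernel_sub (ht : 0 < t) :
    ∫⁻ y, ENNReal.ofReal (heatKernel d t (x - y)) = 1 := by
  rw [lintegral_sub_left_eq_self (fun η => ENNReal.ofReal (heatKernel d t η)),
    lintegral_heatKernel ht]

theorem heatFlow_le_of_ae_le (ht : 0 < t) {C : ℝ≥0∞} (hf : ∀ᵐ y, f y ≤ C) :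
    heatFlow t f x ≤ C := by
  calc heatFlow t f x ≤ heatFlow t (fun _ => C) x := heatFlow_mono_ae hf
    _ = C := by
      rw [heatFlow, lintegral_mul_const _ (by fun_prop), lintegral_heatKernel_sub ht, one_mul]

theorem ae_eq_zero_of_heatFlow_eq_zero (ht : 0 < t) (hf : AEMeasurable f)
    (h : heatFlow t f x = 0) : f =ᵐ[volume] 0 := by
  rw [heatFlow, lintegral_eq_zero_iff' (by fun_prop)] at h
  filter_upwards [h] with y hy
  exact (mul_eq_zero.1 hy).resolve_left (ENNReal.ofReal_pos.2 (heatKernel_pos ht _)).ne'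

theorem heatFlow_rpow_le {p : ℝ} (hp : 1 ≤ p) (ht : 0 < t) (hf : AEMeasurable f) :
    heatFlow t f x ^ p ≤ heatFlow t (fun y => f y ^ p) x := by
  set ρ : EuclideanSpace ℝ (Fin d) → ℝ≥0∞ := fun y => ENNReal.ofReal (heatKernel d t (x - y))
  have hρ : Measurable ρ := by fun_prop
  have : IsProbabilityMeasure (volume.withDensity ρ) :=
    ⟨by rw [withDensity_apply _ .univ, setLIntegral_univ, lintegral_heatKernel_sub ht]⟩
  have hac := withDensity_absolutelyContinuous volume ρ
  have h := rpow_lintegral_le_lintegral_rpow hp (hf.mono_ac hac)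
  rwa [lintegral_withDensity_eq_lintegral_mul₀ hρ.aemeasurable hf,
    lintegral_withDensity_eq_lintegral_mul₀ hρ.aemeasurable (hf.pow_const p)] at h

theorem heatFlow_lintegral {α : Type*} [MeasurableSpace α] {μ : Measure α} [SFinite μ]
    {F : α → EuclideanSpace ℝ (Fin d) → ℝ≥0∞} (hF : Measurable (Function.uncurry F)) :
    heatFlow t (fun y => ∫⁻ a, F a y ∂μ) x = ∫⁻ a, heatFlow t (F a) x ∂μ := by
  have hswap : Measurable fun z : EuclideanSpace ℝ (Fin d) × α =>
      ENNReal.ofReal (heatKernel d t (x - z.1)) * F z.2 z.1 :=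
    (by fun_prop : Measurable fun z : EuclideanSpace ℝ (Fin d) × α =>
      ENNReal.ofReal (heatKernel d t (x - z.1))).mul (hF.comp measurable_swap)
  calc heatFlow t (fun y => ∫⁻ a, F a y ∂μ) x
      = ∫⁻ y, ∫⁻ a, ENNReal.ofReal (heatKernel d t (x - y)) * F a y ∂μ :=
        lintegral_congr fun y => (lintegral_const_mul _ (hF.comp measurable_prodMk_right)).symm
    _ = ∫⁻ a, heatFlow t (F a) x ∂μ := lintegral_lintegral_swap hswap.aemeasurable

theorem heatFlow_heatFlow (hs : 0 < s) (ht : 0 < t) (hf : Measurable f) :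
    heatFlow s (heatFlow t f) x = heatFlow (s + t) f x := by
  calc heatFlow s (heatFlow t f) x
      = ∫⁻ z, heatFlow s (fun y => ENNReal.ofReal (heatKernel d t (y - z)) * f z) x :=
        heatFlow_lintegral (F := fun z y => ENNReal.ofReal (heatKernel d t (y - z)) * f z)
          (by unfold Function.uncurry; fun_prop)
    _ = heatFlow (s + t) f x := lintegral_congr fun z => by
        simp only [heatFlow, ← mul_assoc]
        rw [lintegral_mul_const _ (by fun_prop), lintegral_heatKernel_mul_heatKernel hs ht]

theorem ofReal_heatKernel_mul_heatFlow_le (hs : 0 < s) (hst : 2 * s ≤ t)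
    (y : EuclideanSpace ℝ (Fin d)) :
    ENNReal.ofReal ((2 * Real.pi * s) ^ ((d : ℝ) / 2) * heatKernel d (t / 2) (y - x)) *
      heatFlow s f x ≤ heatFlow t f y := by
  rw [heatFlow, ← lintegral_const_mul' _ _ ENNReal.ofReal_ne_top]
  refine lintegral_mono fun z => ?_
  have hnonneg := heatKernel_pos (d := d) (t := t / 2) (by linarith) (y - x)
  rw [← mul_assoc, ← ENNReal.ofReal_mul (by positivity)]
  gcongr
  simpa only [sub_add_sub_cancel] using mul_heatKernel_mul_heatKernel_le hs hst (y - x) (x - z)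

theorem heatFlow_ofReal_mul_heatKernel_rpow {p c : ℝ} (hp : 0 < p) (hc : 0 ≤ c) (hs : 0 < s)
    (ht : 0 < t) :
    heatFlow s (fun y => ENNReal.ofReal (c * heatKernel d t (y - x)) ^ p) x =
      ENNReal.ofReal (c ^ p * p ^ (-(d : ℝ) / 2) * (4 * Real.pi * t) ^ (-(d : ℝ) / 2 * (p - 1)) *
        (4 * Real.pi * (s + t / p)) ^ (-(d : ℝ) / 2)) := by
  set κ : ℝ := c ^ p * p ^ (-(d : ℝ) / 2) * (4 * Real.pi * t) ^ (-(d : ℝ) / 2 * (p - 1))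
  have hκ : 0 ≤ κ := by positivity
  have hrpow (y : EuclideanSpace ℝ (Fin d)) : ENNReal.ofReal (c * heatKernel d t (y - x)) ^ p =
      ENNReal.ofReal κ * ENNReal.ofReal (heatKernel d (t / p) (y - x)) := by
    have hker := (heatKernel_pos ht (y - x)).le
    rw [← ENNReal.ofReal_mul hκ, ENNReal.ofReal_rpow_of_nonneg (by positivity) hp.le,
      Real.mul_rpow hc hker, heatKernel_rpow hp ht, ← mul_assoc, ← mul_assoc]
  simp only [hrpow]
  rw [heatFlow_const_mul ENNReal.ofReal_ne_top, heatFlow,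
    lintegral_heatKernel_mul_heatKernel hs (by positivity), sub_self, heatKernel_zero,
    ENNReal.ofReal_mul hκ]

theorem integral_heatKernel_mul_nonneg {w : EuclideanSpace ℝ (Fin d) → ℝ} (ht : 0 < t)
    (hw : 0 ≤ᵐ[volume] w) : 0 ≤ ∫ y, heatKernel d t (x - y) * w y :=
  integral_nonneg_of_ae <| hw.mono fun _ hy => mul_nonneg (heatKernel_pos ht _).le hy

theorem ofReal_integral_heatKernel_mul {w : EuclideanSpace ℝ (Fin d) → ℝ} (ht : 0 < t)
    (hw : AEStronglyMeasurable w) (hw₀ : 0 ≤ᵐ[volume] w)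
    (hw_top : heatFlow t (fun y => ENNReal.ofReal (w y)) x ≠ ∞) :
    ENNReal.ofReal (∫ y, heatKernel d t (x - y) * w y) =
      heatFlow t (fun y => ENNReal.ofReal (w y)) x := by
  simp only [heatFlow, ← ENNReal.ofReal_mul (heatKernel_pos ht _).le] at hw_top ⊢
  refine ofReal_integral_eq_lintegral_ofReal_of_ne_top ?_ ?_ hw_top
  · exact (by fun_prop : Measurable fun y => heatKernel d t (x - y)).aestronglyMeasurable.mul hw
  · filter_upwards [hw₀] with y hy using mul_nonneg (heatKernel_pos ht _).le hy

theorem ofReal_integral_heatKernel_mul_rpow {w : EuclideanSpace ℝ (Fin d) → ℝ} {p : ℝ} (hp : 0 ≤ p)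
    (ht : 0 < t) (hw : AEStronglyMeasurable w) (hw₀ : 0 ≤ᵐ[volume] w)
    (hw_top : heatFlow t (fun y => ENNReal.ofReal (w y) ^ p) x ≠ ∞) :
    ENNReal.ofReal (∫ y, heatKernel d t (x - y) * w y ^ p) =
      heatFlow t (fun y => ENNReal.ofReal (w y) ^ p) x := by
  have hpow : heatFlow t (fun y => ENNReal.ofReal (w y ^ p)) x =
      heatFlow t (fun y => ENNReal.ofReal (w y) ^ p) x :=
    lintegral_congr_ae <| hw₀.mono fun y hy => by
      simp only [ENNReal.ofReal_rpow_of_nonneg hy hp]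
  rw [← hpow] at hw_top ⊢
  exact ofReal_integral_heatKernel_mul ht (hw.aemeasurable.pow_const p).aestronglyMeasurable
    (hw₀.mono fun y hy => Real.rpow_nonneg hy p) hw_top

end HeatFlow

section MildSupersolution

open Set Filter
open scoped ENNReal

variable {d : ℕ} {p : ℝ} {U₀ : EuclideanSpace ℝ (Fin d) → ℝ≥0∞}
  {U : ℝ → EuclideanSpace ℝ (Fin d) → ℝ≥0∞} {x : EuclideanSpace ℝ (Fin d)} {s t T : ℝ}

/-- The part of the Duhamel term `∫₀ᵗ e^{(t-r)Δ} U(r)^p dr` at `x` that is due to the source on the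
times `0 < r < s`; the whole term is the case `s = t`. -/
noncomputable def duhamel (p : ℝ) (U : ℝ → EuclideanSpace ℝ (Fin d) → ℝ≥0∞) (t : ℝ)
    (x : EuclideanSpace ℝ (Fin d)) (s : ℝ) : ℝ≥0∞ :=
  ∫⁻ r in Ioo 0 s, heatFlow (t - r) (fun y => U r y ^ p) x

/-- `U` is a nonnegative global mild supersolution of `∂ₜU = ΔU + U ^ p` with initial data `U₀`.
Functions take values in `[0, ∞]`; finiteness almost everywhere at each positive time is the only
bound imposed on `U`. -/
structure IsMildSupersolution (p : ℝ) (U₀ : EuclideanSpace ℝ (Fin d) → ℝ≥0∞)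
    (U : ℝ → EuclideanSpace ℝ (Fin d) → ℝ≥0∞) : Prop where
  measurable : Measurable (Function.uncurry U)
  ae_lt_top : ∀ t, 0 < t → ∀ᵐ x, U t x < ∞
  heatFlow_add_duhamel_le : ∀ t, 0 < t → ∀ᵐ x, heatFlow t U₀ x + duhamel p U t x t ≤ U t x

theorem ofReal_integral_integral_heatKernel_mul_rpow {u : ℝ → EuclideanSpace ℝ (Fin d) → ℝ}
    {C : ℝ≥0∞} (hp : 0 ≤ p) (hu : Measurable (Function.uncurry u))
    (hu_nonneg : ∀ s ∈ Ioo 0 t, 0 ≤ᵐ[volume] u s) (hC : C ≠ ∞)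
    (hu_le : ∀ s ∈ Ioo 0 t, ∀ᵐ y, ENNReal.ofReal (u s y) ≤ C) :
    ENNReal.ofReal (∫ s in Ioc 0 t, ∫ y, heatKernel d (t - s) (x - y) * u s y ^ p) =
      duhamel p (fun s y => ENNReal.ofReal (u s y)) t x t := by
  have hslice_le (s : ℝ) (hs : s ∈ Ioo 0 t) :
      heatFlow (t - s) (fun y => ENNReal.ofReal (u s y) ^ p) x ≤ C ^ p :=
    heatFlow_le_of_ae_le (sub_pos.2 hs.2) <|
      (hu_le s hs).mono fun y hy => ENNReal.rpow_le_rpow hy hp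
  have hCp : C ^ p ≠ ∞ := ENNReal.rpow_ne_top_of_nonneg hp hC
  have hinner (s : ℝ) (hs : s ∈ Ioo 0 t) :
      ENNReal.ofReal (∫ y, heatKernel d (t - s) (x - y) * u s y ^ p) =
        heatFlow (t - s) (fun y => ENNReal.ofReal (u s y) ^ p) x :=
    ofReal_integral_heatKernel_mul_rpow hp (sub_pos.2 hs.2)
      (hu.comp measurable_prodMk_left).aestronglyMeasurable (hu_nonneg s hs)
      (ne_top_of_le_ne_top hCp (hslice_le s hs))
  have houter : ∫⁻ s in Ioo 0 t, ENNReal.ofReal (∫ y, heatKernel d (t - s) (x - y) * u s y ^ p) =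
      duhamel p (fun s y => ENNReal.ofReal (u s y)) t x t :=
    setLIntegral_congr_fun measurableSet_Ioo hinner
  have hfin : duhamel p (fun s y => ENNReal.ofReal (u s y)) t x t ≠ ∞ := by
    refine ne_top_of_le_ne_top ?_ (setLIntegral_mono' measurableSet_Ioo hslice_le)
    rw [setLIntegral_const, Real.volume_Ioo]
    exact ENNReal.mul_ne_top hCp ENNReal.ofReal_ne_top
  rw [integral_Ioc_eq_integral_Ioo, ofReal_integral_eq_lintegral_ofReal_of_ne_top, houter]
  · refine (StronglyMeasurable.integral_prod_right
      (f := fun s y => heatKernel d (t - s) (x - y) * u s y ^ p) ?_).aestronglyMeasurable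
    exact ((by fun_prop : Measurable fun z : ℝ × EuclideanSpace ℝ (Fin d) =>
      heatKernel d (t - z.1) (x - z.2)).mul (hu.pow_const p)).stronglyMeasurable
  · refine (ae_restrict_iff' measurableSet_Ioo).2 (.of_forall fun s hs => ?_)
    exact integral_heatKernel_mul_nonneg (sub_pos.2 hs.2) <|
      (hu_nonneg s hs).mono fun y hy => Real.rpow_nonneg hy p
  · rwa [houter]

namespace IsMildSupersolution

theorem measurable_apply (hU : IsMildSupersolution p U₀ U) (t : ℝ) : Measurable (U t) :=
  hU.measurable.comp measurable_prodMk_left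

theorem ae_duhamel_ne_top (hU : IsMildSupersolution p U₀ U) (ht : 0 < t) :
    ∀ᵐ x, duhamel p U t x t ≠ ∞ := by
  filter_upwards [hU.heatFlow_add_duhamel_le t ht, hU.ae_lt_top t ht] with x hle hlt
  exact ((le_of_add_le_right hle).trans_lt hlt).ne

theorem duhamel_le_heatFlow (hU : IsMildSupersolution p U₀ U) (hs : 0 < s) (hst : s < t) :
    duhamel p U t x s ≤ heatFlow (t - s) (U s) x := by
  have hpow : Measurable fun z : ℝ × EuclideanSpace ℝ (Fin d) => U z.1 z.2 ^ p :=
    hU.measurable.pow_const p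
  have hF : Measurable (Function.uncurry fun r y => heatFlow (s - r) (fun z => U r z ^ p) y) :=
    measurable_heatFlow (α := ℝ × EuclideanSpace ℝ (Fin d)) (F := fun q z => U q.1 z ^ p)
      (by fun_prop) (hpow.comp (by fun_prop : Measurable fun z :
        (ℝ × EuclideanSpace ℝ (Fin d)) × EuclideanSpace ℝ (Fin d) => (z.1.1, z.2))) measurable_snd
  calc duhamel p U t x s
      = ∫⁻ r in Ioo 0 s, heatFlow (t - s) (heatFlow (s - r) fun y => U r y ^ p) x := by
        refine setLIntegral_congr_fun measurableSet_Ioo fun r hr => ?_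
        rw [heatFlow_heatFlow (sub_pos.2 hst) (sub_pos.2 hr.2)
          ((hU.measurable_apply r).pow_const p), sub_add_sub_cancel]
    _ = heatFlow (t - s) (fun y => duhamel p U s y s) x := (heatFlow_lintegral hF).symm
    _ ≤ heatFlow (t - s) (U s) x :=
        heatFlow_mono_ae ((hU.heatFlow_add_duhamel_le s hs).mono fun _ hy => le_of_add_le_right hy)

theorem duhamel_add_mul_rpow_le (hU : IsMildSupersolution p U₀ U) (hp : 1 ≤ p) (hs : 0 ≤ s)
    (hst : s ≤ t) (htT : t ≤ T) :
    duhamel p U T x s + ENNReal.ofReal (t - s) * duhamel p U T x s ^ p ≤ duhamel p U T x t := by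
  have hdisj : Disjoint (Ioo 0 s) (Ioo s t) :=
    Set.disjoint_left.2 fun r hr hr' => (hr.2.trans hr'.1).false
  have hsource (r : ℝ) (hr : r ∈ Ioo s t) :
      duhamel p U T x s ^ p ≤ heatFlow (T - r) (fun y => U r y ^ p) x := by
    have hrT : r < T := hr.2.trans_le htT
    calc duhamel p U T x s ^ p ≤ duhamel p U T x r ^ p :=
          ENNReal.rpow_le_rpow (lintegral_mono_set (Ioo_subset_Ioo_right hr.1.le)) (by linarith)
      _ ≤ heatFlow (T - r) (U r) x ^ p :=
          ENNReal.rpow_le_rpow (hU.duhamel_le_heatFlow (hs.trans_lt hr.1) hrT) (by linarith)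
      _ ≤ heatFlow (T - r) (fun y => U r y ^ p) x :=
          heatFlow_rpow_le hp (sub_pos.2 hrT) (hU.measurable_apply r).aemeasurable
  calc duhamel p U T x s + ENNReal.ofReal (t - s) * duhamel p U T x s ^ p
      = duhamel p U T x s + ∫⁻ _ in Ioo s t, duhamel p U T x s ^ p := by
        rw [setLIntegral_const, Real.volume_Ioo, mul_comm]
    _ ≤ duhamel p U T x s + ∫⁻ r in Ioo s t, heatFlow (T - r) (fun y => U r y ^ p) x := by
        gcongr 1
        exact setLIntegral_mono' measurableSet_Ioo hsource
    _ = ∫⁻ r in Ioo 0 s ∪ Ioo s t, heatFlow (T - r) (fun y => U r y ^ p) x :=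
        (lintegral_union measurableSet_Ioo hdisj).symm
    _ ≤ duhamel p U T x t := lintegral_mono_set <|
        union_subset (Ioo_subset_Ioo_right hst) (Ioo_subset_Ioo_left hs)

theorem sub_mul_rpow_le_of_le_duhamel (hU : IsMildSupersolution p U₀ U) (hp : 1 < p) (hs : 0 ≤ s)
    (hsT : s ≤ T) (hfin : duhamel p U T x T ≠ ∞) {A : ℝ} (hA : 0 < A)
    (hAs : ENNReal.ofReal A ≤ duhamel p U T x s) :
    (T - s) * A ^ (p - 1) ≤ (1 - 2 ^ (1 - p))⁻¹ := by
  have hfin' {t : ℝ} (ht : t ≤ T) : duhamel p U T x t ≠ ∞ :=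
    ne_top_of_le_ne_top hfin (lintegral_mono_set (Ioo_subset_Ioo_right ht))
  refine sub_mul_rpow_le_of_superlinear_growth (H := fun t => (duhamel p U T x t).toReal) hp hA
    ((ENNReal.ofReal_le_iff_le_toReal (hfin' hsT)).1 hAs) fun a b ha hab hb => ?_
  have hgrowth := hU.duhamel_add_mul_rpow_le (x := x) hp.le (hs.trans ha) hab hb
  have hmul : ENNReal.ofReal (b - a) * duhamel p U T x a ^ p ≠ ∞ :=
    ne_top_of_le_ne_top (hfin' hb) (le_of_add_le_right hgrowth)
  have h := ENNReal.toReal_mono (hfin' hb) hgrowth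
  rwa [ENNReal.toReal_add (hfin' (hab.trans hb)) hmul, ENNReal.toReal_mul,
    ENNReal.toReal_ofReal (sub_nonneg.2 hab), ← ENNReal.toReal_rpow] at h

theorem ae_ofReal_mul_heatKernel_le (hU : IsMildSupersolution p U₀ U) {m : ℝ}
    (hm : 0 ≤ m) (hm_le : ENNReal.ofReal m ≤ heatFlow 1 U₀ x) (ht : 2 ≤ t) :
    ∀ᵐ y, ENNReal.ofReal ((2 * Real.pi) ^ ((d : ℝ) / 2) * m * heatKernel d (t / 2) (y - x)) ≤
      U t y := by
  filter_upwards [hU.heatFlow_add_duhamel_le t (by linarith)] with y hy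
  calc ENNReal.ofReal ((2 * Real.pi) ^ ((d : ℝ) / 2) * m * heatKernel d (t / 2) (y - x))
      = ENNReal.ofReal ((2 * Real.pi * 1) ^ ((d : ℝ) / 2) * heatKernel d (t / 2) (y - x)) *
          ENNReal.ofReal m := by rw [← ENNReal.ofReal_mul' hm, mul_one, mul_right_comm]
    _ ≤ ENNReal.ofReal ((2 * Real.pi * 1) ^ ((d : ℝ) / 2) * heatKernel d (t / 2) (y - x)) *
          heatFlow 1 U₀ x := by gcongr
    _ ≤ heatFlow t U₀ y := ofReal_heatKernel_mul_heatFlow_le one_pos (by linarith) y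
    _ ≤ U t y := le_of_add_le_left hy

theorem le_heatFlow_rpow (hU : IsMildSupersolution p U₀ U) (hp : 1 ≤ p) {m : ℝ} (hm : 0 ≤ m)
    (hm_le : ENNReal.ofReal m ≤ heatFlow 1 U₀ x) (ht : 2 ≤ t) (htT : t < T) :
    ENNReal.ofReal (((2 * Real.pi) ^ ((d : ℝ) / 2) * m) ^ p * p ^ (-(d : ℝ) / 2) *
      (2 * Real.pi * t) ^ (-(d : ℝ) / 2 * (p - 1)) * (4 * Real.pi * T) ^ (-(d : ℝ) / 2)) ≤
      heatFlow (T - t) (fun y => U t y ^ p) x := by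
  have hp₀ : 0 < p := by linarith
  have ht₀ : 0 < t := by linarith
  have htime₀ : 0 < T - t + t / 2 / p := add_pos (sub_pos.2 htT) (by positivity)
  have htime : T - t + t / 2 / p ≤ T := by
    linarith [div_le_self (a := t / 2) (by linarith) hp]
  calc _ ≤ ENNReal.ofReal (((2 * Real.pi) ^ ((d : ℝ) / 2) * m) ^ p * p ^ (-(d : ℝ) / 2) *
          (4 * Real.pi * (t / 2)) ^ (-(d : ℝ) / 2 * (p - 1)) *
          (4 * Real.pi * (T - t + t / 2 / p)) ^ (-(d : ℝ) / 2)) := by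
        rw [show 4 * Real.pi * (t / 2) = 2 * Real.pi * t by ring]
        refine ENNReal.ofReal_le_ofReal (mul_le_mul_of_nonneg_left ?_ (by positivity))
        refine Real.rpow_le_rpow_of_nonpos (mul_pos (by positivity) htime₀) (by gcongr) ?_
        exact div_nonpos_of_nonpos_of_nonneg (neg_nonpos.2 d.cast_nonneg) two_pos.le
    _ = heatFlow (T - t) (fun y => ENNReal.ofReal
          ((2 * Real.pi) ^ ((d : ℝ) / 2) * m * heatKernel d (t / 2) (y - x)) ^ p) x :=
        (heatFlow_ofReal_mul_heatKernel_rpow hp₀ (by positivity) (sub_pos.2 htT)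
          (half_pos ht₀)).symm
    _ ≤ heatFlow (T - t) (fun y => U t y ^ p) x :=
        heatFlow_mono_ae <| (hU.ae_ofReal_mul_heatKernel_le hm hm_le ht).mono fun _ hy =>
          ENNReal.rpow_le_rpow hy hp₀.le

theorem exists_log_le_duhamel (hU : IsMildSupersolution p U₀ U) (hp : 1 ≤ p)
    (hpF : d * (p - 1) ≤ 2) (hx : heatFlow 1 U₀ x ≠ 0) :
    ∃ c > 0, ∀ T ≥ 4, ENNReal.ofReal (c * T ^ (-(d : ℝ) / 2) * Real.log (T / 4)) ≤
      duhamel p U T x (T / 2) := by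
  obtain ⟨m, -, hm, hm_lt⟩ := ENNReal.lt_iff_exists_real_btwn.1 (pos_iff_ne_zero.2 hx)
  rw [ENNReal.ofReal_pos] at hm
  set c : ℝ := ((2 * Real.pi) ^ ((d : ℝ) / 2) * m) ^ p * p ^ (-(d : ℝ) / 2) * (2 * Real.pi)⁻¹ *
    (4 * Real.pi) ^ (-(d : ℝ) / 2) with hc
  refine ⟨c, by positivity, fun T hT => ?_⟩
  have hsource (r : ℝ) (hr : r ∈ Ioo 2 (T / 2)) :
      ENNReal.ofReal (c * T ^ (-(d : ℝ) / 2) * r⁻¹) ≤ heatFlow (T - r) (fun y => U r y ^ p) x := by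
    have hr₀ : 0 < r := two_pos.trans hr.1
    have hdecay : (2 * Real.pi * r)⁻¹ ≤ (2 * Real.pi * r) ^ (-(d : ℝ) / 2 * (p - 1)) := by
      rw [← Real.rpow_neg_one]
      refine Real.rpow_le_rpow_of_exponent_le ?_ (by linarith)
      nlinarith [Real.pi_gt_three, hr.1]
    refine le_trans (ENNReal.ofReal_le_ofReal ?_)
      (hU.le_heatFlow_rpow hp hm.le hm_lt.le hr.1.le (hr.2.trans (by linarith)))
    calc c * T ^ (-(d : ℝ) / 2) * r⁻¹
        = ((2 * Real.pi) ^ ((d : ℝ) / 2) * m) ^ p * p ^ (-(d : ℝ) / 2) * (2 * Real.pi * r)⁻¹ *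
            (4 * Real.pi * T) ^ (-(d : ℝ) / 2) := by
          rw [hc, Real.mul_rpow (x := 4 * Real.pi) (by positivity) (by linarith), mul_inv _ r]
          ring
      _ ≤ _ := by gcongr
  calc ENNReal.ofReal (c * T ^ (-(d : ℝ) / 2) * Real.log (T / 4))
      = ∫⁻ r in Ioo 2 (T / 2), ENNReal.ofReal (c * T ^ (-(d : ℝ) / 2) * r⁻¹) := by
        rw [setLIntegral_Ioo_ofReal_mul_inv two_pos (by linarith) (by positivity), div_div]
        norm_num
    _ ≤ ∫⁻ r in Ioo 2 (T / 2), heatFlow (T - r) (fun y => U r y ^ p) x :=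
        setLIntegral_mono' measurableSet_Ioo hsource
    _ ≤ duhamel p U T x (T / 2) := lintegral_mono_set (Ioo_subset_Ioo_left two_pos.le)

theorem exists_log_rpow_le (hU : IsMildSupersolution p U₀ U) (hp : 1 < p)
    (hpF : d * (p - 1) ≤ 2) (hx : heatFlow 1 U₀ x ≠ 0) :
    ∃ c > 0, ∀ T > 4, duhamel p U T x T ≠ ∞ →
      (c * Real.log (T / 4)) ^ (p - 1) ≤ 2 * (1 - 2 ^ (1 - p))⁻¹ := by
  obtain ⟨c, hc, hlog⟩ := hU.exists_log_le_duhamel hp.le hpF hx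
  refine ⟨c, hc, fun T hT hfin => ?_⟩
  have hT₀ : 0 < T := by linarith
  have hlogT : 0 < Real.log (T / 4) := Real.log_pos (by linarith)
  have hbound : (T - T / 2) * (c * T ^ (-(d : ℝ) / 2) * Real.log (T / 4)) ^ (p - 1) ≤
      (1 - 2 ^ (1 - p))⁻¹ :=
    hU.sub_mul_rpow_le_of_le_duhamel hp (by linarith) (by linarith) hfin (by positivity)
      (hlog T hT.le)
  have hscale : 1 ≤ T * (T ^ (-(d : ℝ) / 2)) ^ (p - 1) := by
    calc 1 ≤ T ^ (1 + -(d : ℝ) / 2 * (p - 1)) := Real.one_le_rpow (by linarith) (by linarith)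
      _ = T * (T ^ (-(d : ℝ) / 2)) ^ (p - 1) := by
        rw [Real.rpow_add hT₀, Real.rpow_one, Real.rpow_mul hT₀.le]
  have hmul : (c * T ^ (-(d : ℝ) / 2) * Real.log (T / 4)) ^ (p - 1) =
      (T ^ (-(d : ℝ) / 2)) ^ (p - 1) * (c * Real.log (T / 4)) ^ (p - 1) := by
    rw [← Real.mul_rpow (by positivity) (by positivity), mul_left_comm, mul_assoc]
  calc (c * Real.log (T / 4)) ^ (p - 1)
      ≤ T * (T ^ (-(d : ℝ) / 2)) ^ (p - 1) * (c * Real.log (T / 4)) ^ (p - 1) :=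
        le_mul_of_one_le_left (by positivity) hscale
    _ = 2 * ((T - T / 2) * (c * T ^ (-(d : ℝ) / 2) * Real.log (T / 4)) ^ (p - 1)) := by
        rw [hmul]; ring
    _ ≤ 2 * (1 - 2 ^ (1 - p))⁻¹ := by gcongr

end IsMildSupersolution

theorem isMildSupersolution_ofReal {u₀ : EuclideanSpace ℝ (Fin d) → ℝ}
    {u : ℝ → EuclideanSpace ℝ (Fin d) → ℝ} (hp : 0 ≤ p) (hu₀ : AEStronglyMeasurable u₀)
    (hu₀_bdd : eLpNorm u₀ ∞ volume < ∞) (hu₀_nonneg : 0 ≤ᵐ[volume] u₀)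
    (hu : Measurable (Function.uncurry u)) (hu_nonneg : ∀ t, 0 < t → 0 ≤ᵐ[volume] u t)
    (hu_bdd : ∀ t, 0 < t → (⨆ s ∈ Icc (0 : ℝ) t, eLpNorm (u s) ∞ volume) < ∞)
    (hmild : ∀ t, 0 < t → ∀ᵐ x, (∫ y, heatKernel d t (x - y) * u₀ y) +
      (∫ s in Ioc 0 t, ∫ y, heatKernel d (t - s) (x - y) * u s y ^ p) ≤ u t x) :
    IsMildSupersolution p (fun x => ENNReal.ofReal (u₀ x)) fun t x => ENNReal.ofReal (u t x) where
  measurable := hu.ennreal_ofReal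
  ae_lt_top _ _ := .of_forall fun _ => ENNReal.ofReal_lt_top
  heatFlow_add_duhamel_le t ht := by
    filter_upwards [hmild t ht] with x hx
    have hfree := ofReal_integral_heatKernel_mul (x := x) ht hu₀ hu₀_nonneg <|
      ne_top_of_le_ne_top hu₀_bdd.ne <|
        heatFlow_le_of_ae_le ht (ae_ofReal_le_of_eLpNorm_top_le le_rfl)
    have hu_le (s : ℝ) (hs : s ∈ Ioo 0 t) :
        ∀ᵐ y, ENNReal.ofReal (u s y) ≤ ⨆ s ∈ Icc (0 : ℝ) t, eLpNorm (u s) ∞ volume :=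
      ae_ofReal_le_of_eLpNorm_top_le <|
        le_biSup (fun s => eLpNorm (u s) ∞ volume) (Ioo_subset_Icc_self hs)
    have hduhamel := ofReal_integral_integral_heatKernel_mul_rpow (x := x) hp hu
      (fun s hs => hu_nonneg s hs.1) (hu_bdd t ht).ne hu_le
    have hfree_nonneg : 0 ≤ ∫ y, heatKernel d t (x - y) * u₀ y :=
      integral_heatKernel_mul_nonneg ht hu₀_nonneg
    have hduhamel_nonneg :
        0 ≤ ∫ s in Ioc 0 t, ∫ y, heatKernel d (t - s) (x - y) * u s y ^ p := by
      rw [integral_Ioc_eq_integral_Ioo]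
      exact setIntegral_nonneg measurableSet_Ioo fun s hs =>
        integral_heatKernel_mul_nonneg (sub_pos.2 hs.2) <|
          (hu_nonneg s hs.1).mono fun y hy => Real.rpow_nonneg hy p
    rw [← hfree, ← hduhamel, ← ENNReal.ofReal_add hfree_nonneg hduhamel_nonneg]
    exact ENNReal.ofReal_le_ofReal hx

theorem fujita_blowup_general {d : ℕ} {p : ℝ} (hp : 1 < p) (hpF : d * (p - 1) ≤ 2)
    {U₀ : EuclideanSpace ℝ (Fin d) → ℝ≥0∞} (hU₀ : AEMeasurable U₀)
    {U : ℝ → EuclideanSpace ℝ (Fin d) → ℝ≥0∞} (hU : IsMildSupersolution p U₀ U) :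
    U₀ =ᵐ[volume] 0 := by
  by_contra hne
  obtain ⟨x, hx⟩ : ∃ x, ∀ n : ℕ, 0 < n → duhamel p U n x n ≠ ∞ :=
    (ae_all_iff.2 fun n => eventually_imp_distrib_left.2 fun hn =>
      hU.ae_duhamel_ne_top (Nat.cast_pos.2 hn)).exists
  obtain ⟨c, hc, hbound⟩ := hU.exists_log_rpow_le (x := x) hp hpF fun h =>
    hne (ae_eq_zero_of_heatFlow_eq_zero one_pos hU₀ h)
  have hlim : Tendsto (fun n : ℕ => (c * Real.log (n / 4)) ^ (p - 1)) atTop atTop :=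
    (tendsto_rpow_atTop (sub_pos.2 hp)).comp <| (Real.tendsto_log_atTop.comp <|
      tendsto_natCast_atTop_atTop.atTop_div_const four_pos).const_mul_atTop hc
  obtain ⟨n, hn, hn4⟩ := ((hlim.eventually_gt_atTop (2 * (1 - 2 ^ (1 - p))⁻¹)).and
    (eventually_gt_atTop 4)).exists
  exact hn.not_ge (hbound n (by exact_mod_cast hn4) (hx n (by omega)))

end MildSupersolution

/-- **Fujita blow-up theorem, including the critical case** (commutative case of the paper's
Theorem 7.4): for `1 < p ≤ 1 + 2/d`, the only nonnegative global mild solution of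
`∂ₜu = Δu + u^p`, locally bounded in time in `L^∞`, has vanishing initial data. -/
theorem fujita_blowup (d : ℕ) (hd : 1 ≤ d) (p : ℝ) (hp : 1 < p)
    (hpF : p ≤ 1 + 2 / (d : ℝ))
    (u₀ : EuclideanSpace ℝ (Fin d) → ℝ) (h₀meas : Measurable u₀)
    (h₀bdd : eLpNorm u₀ ⊤ volume < ⊤) (h₀pos : 0 ≤ᵐ[volume] u₀)
    (u : ℝ → EuclideanSpace ℝ (Fin d) → ℝ)
    (humeas : Measurable (Function.uncurry u))
    (hupos : ∀ t : ℝ, 0 ≤ t → 0 ≤ᵐ[volume] u t)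
    (hubdd : ∀ T : ℝ, 0 < T →
      (⨆ t ∈ Set.Icc (0 : ℝ) T, eLpNorm (u t) ⊤ volume) < ⊤)
    (hmild₀ : u 0 =ᵐ[volume] u₀)
    (hmild : ∀ t : ℝ, 0 < t → ∀ᵐ x ∂volume, u t x =
      (∫ y, heatKernel d t (x - y) * u₀ y) +
        ∫ s in Set.Ioc (0 : ℝ) t, ∫ y, heatKernel d (t - s) (x - y) * u s y ^ p) :
    u₀ =ᵐ[volume] 0 := by
  have hd₀ : (0 : ℝ) < d := by exact_mod_cast hd
  have hcrit : d * (p - 1) ≤ 2 := by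
    rw [mul_comm, ← le_div_iff₀ hd₀]
    linarith
  have hU : IsMildSupersolution p (fun x => ENNReal.ofReal (u₀ x))
      (fun t x => ENNReal.ofReal (u t x)) :=
    isMildSupersolution_ofReal (by linarith) h₀meas.aestronglyMeasurable h₀bdd h₀pos humeas
      (fun t ht => hupos t ht.le) hubdd fun t ht => (hmild t ht).mono fun x hx => hx.ge
  filter_upwards [fujita_blowup_general hp hcrit h₀meas.ennreal_ofReal.aemeasurable hU, h₀pos]
    with x hx hx_nonneg
  exact le_antisymm (ENNReal.ofReal_eq_zero.1 hx) hx_nonneg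
end
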